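/- arXiv:2503.19790 — 7 statements merged into one kernel-verified Lean document; each statement's English description precedes it below -/
import Mathlib

section
/- Let n ≥ 1 and let D be a submodule of (Fin n → ZMod 2) such that the orthogonal complement D^⊥ of D (with respect to the standard dot product) is strictly contained in D, and let k = dim D − dim D^⊥ (dimensions as ZMod 2 vector spaces). Then the following are equivalent: (i) there exists v ∈ D with v ⬝ v = 1; (ii) there exists a family w : Fin k → (Fin n → ZMod 2) with w j ∈ D for every j, such that D = D^⊥ + span{w 0, …, w (k−1)} and w i ⬝ w j = 1 if i = j and w i ⬝ w j = 0 if i ≠ j. -/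
/-!
An orthonormal family spans a complement of `orth D` in `D` as soon as it is as large as possible.
Let `S ⊆ D` be an orthonormal set of maximal size and `E` the set of vectors of `D` orthogonal
to `S`. Subtracting `∑ s ∈ S, (x ⬝ s) s` from `x` gives `D = E + span S`, so it suffices that
`E ⊆ orth D` (`IsON.mem_orth_of_maximal`). By maximality every `x ∈ E` has `x ⬝ x = 0`. If `a ∈ E`
is not in `orth D`, then `a ⬝ b = 1` for some `b ∈ E`. An odd vector exists, so `S` has an element
`s`, and over `ZMod 2` the vectors `s + a` and `s + b` are orthonormal: their dot product is
`1 + a ⬝ b = 0`. Replacing `s` by these two gives a larger orthonormal set, a contradiction.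
The size of `S` is then forced, because orthonormal vectors are independent and
`orth D ⊓ span S = ⊥`. Conversely `dim D - dim (orth D) > 0`, and any `w j` is an odd vector of `D`.
-/

/-- Standard dot product over `ZMod 2`. -/
def dot {n : ℕ} (u v : Fin n → ZMod 2) : ZMod 2 := ∑ i, u i * v i

/-- Orthogonal complement of a submodule w.r.t. the standard dot product. -/
def orth {n : ℕ} (D : Submodule (ZMod 2) (Fin n → ZMod 2)) :
    Submodule (ZMod 2) (Fin n → ZMod 2) where
  carrier := {v | ∀ w ∈ D, dot v w = 0}
  add_mem' := by
    intro a b ha hb w hw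
    have h : dot (a + b) w = dot a w + dot b w := by
      simp [dot, add_mul, Finset.sum_add_distrib]
    rw [h, ha w hw, hb w hw, add_zero]
  zero_mem' := by
    intro w hw
    simp [dot]
  smul_mem' := by
    intro c v hv w hw
    have h : dot (c • v) w = c * dot v w := by
      simp [dot, Finset.mul_sum, mul_assoc]
    rw [h, hv w hw, mul_zero]

section Dot
variable {n : ℕ} (u v w : Fin n → ZMod 2)

lemma dot_comm' : dot u v = dot v u := dotProduct_comm u v

lemma dot_add' : dot u (v + w) = dot u v + dot u w := dotProduct_add u v w

lemma add_dot' : dot (u + v) w = dot u w + dot v w := add_dotProduct u v w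

lemma sub_dot' : dot (u - v) w = dot u w - dot v w := sub_dotProduct u v w

lemma smul_dot' (c : ZMod 2) : dot (c • u) v = c * dot u v := smul_dotProduct c u v

lemma sum_dot' {ι : Type*} (S : Finset ι) (f : ι → Fin n → ZMod 2) :
    dot (∑ i ∈ S, f i) v = ∑ i ∈ S, dot (f i) v := sum_dotProduct S f v

end Dot

/-- `S` is an orthonormal set of vectors of `D` for the standard dot product over `ZMod 2`. -/
def IsON {n : ℕ} (D : Submodule (ZMod 2) (Fin n → ZMod 2)) (S : Finset (Fin n → ZMod 2)) : Prop :=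
  (∀ s ∈ S, s ∈ D) ∧ ∀ s ∈ S, ∀ t ∈ S, dot s t = if s = t then 1 else 0

namespace IsON

variable {n : ℕ} {D : Submodule (ZMod 2) (Fin n → ZMod 2)} {S : Finset (Fin n → ZMod 2)}

lemma mono (h : IsON D S) {T : Finset (Fin n → ZMod 2)} (hT : T ⊆ S) : IsON D T :=
  ⟨fun s hs => h.1 s (hT hs), fun s hs t ht => h.2 s (hT hs) t (hT ht)⟩

lemma notMem {x : Fin n → ZMod 2} (hx : dot x x = 1) (hxS : ∀ s ∈ S, dot x s = 0) : x ∉ S :=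
  fun h => by simp [hxS x h] at hx

lemma insert (h : IsON D S) {x : Fin n → ZMod 2} (hxD : x ∈ D) (hx : dot x x = 1)
    (hxS : ∀ s ∈ S, dot x s = 0) : IsON D (insert x S) := by
  have hn := notMem hx hxS
  refine ⟨fun s hs => ?_, fun s hs t ht => ?_⟩
  · rcases Finset.mem_insert.1 hs with rfl | hs
    exacts [hxD, h.1 s hs]
  · rcases Finset.mem_insert.1 hs with rfl | hs' <;>
      rcases Finset.mem_insert.1 ht with rfl | ht'
    · simp [hx]
    · rw [hxS t ht', if_neg (ne_of_mem_of_not_mem ht' hn).symm]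
    · rw [dot_comm', hxS s hs', if_neg (ne_of_mem_of_not_mem hs' hn)]
    · exact h.2 s hs' t ht'

lemma dot_sum_smul (h : IsON D S) (c : (Fin n → ZMod 2) → ZMod 2) {t : Fin n → ZMod 2}
    (ht : t ∈ S) : dot (∑ s ∈ S, c s • s) t = c t := by
  rw [sum_dot', Finset.sum_eq_single_of_mem t ht]
  · rw [smul_dot', h.2 t ht t ht, if_pos rfl, mul_one]
  · intro s hs hst
    rw [smul_dot', h.2 s hs t ht, if_neg hst, mul_zero]

lemma linearIndependent (h : IsON D S) :
    LinearIndependent (ZMod 2) (fun s : S => (s : Fin n → ZMod 2)) := by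
  change LinearIndepOn (ZMod 2) id (S : Set (Fin n → ZMod 2))
  rw [linearIndepOn_finset_iff]
  intro c hc t ht
  have := h.dot_sum_smul c ht
  simp only [id] at hc
  rw [← this, hc]
  simp [dot]

lemma disjoint_orth (h : IsON D S) :
    Disjoint (orth D) (Submodule.span (ZMod 2) (S : Set (Fin n → ZMod 2))) := by
  rw [Submodule.disjoint_def]
  intro x hx hxS
  obtain ⟨c, -, rfl⟩ := Submodule.mem_span_finset.1 hxS
  refine Finset.sum_eq_zero fun t ht => ?_
  rw [← h.dot_sum_smul c ht, hx t (h.1 t ht), zero_smul]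

/-- Every vector of `D` is, modulo `span S`, a vector of `D` orthogonal to `S`. -/
lemma exists_residual (h : IsON D S) {x : Fin n → ZMod 2} (hx : x ∈ D) :
    ∃ e ∈ D, ∃ y ∈ Submodule.span (ZMod 2) (S : Set (Fin n → ZMod 2)),
      (∀ s ∈ S, dot e s = 0) ∧ x = e + y := by
  refine ⟨x - ∑ s ∈ S, dot x s • s, D.sub_mem hx
    (D.sum_mem fun s hs => D.smul_mem _ (h.1 s hs)), ∑ s ∈ S, dot x s • s,
    Submodule.sum_mem _ fun s hs => Submodule.smul_mem _ _ (Submodule.subset_span hs), ?_, ?_⟩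
  · intro s hs
    rw [sub_dot', h.dot_sum_smul _ hs, sub_self]
  · rw [sub_add_cancel]

/-- A vector orthogonal to `S` is orthogonal to `span S`. -/
lemma dot_span {a y : Fin n → ZMod 2} (ha : ∀ s ∈ S, dot a s = 0)
    (hy : y ∈ Submodule.span (ZMod 2) (S : Set (Fin n → ZMod 2))) : dot a y = 0 := by
  obtain ⟨c, -, rfl⟩ := Submodule.mem_span_finset.1 hy
  rw [dot_comm', sum_dot']
  exact Finset.sum_eq_zero fun s hs => by rw [smul_dot', dot_comm', ha s hs, mul_zero]

lemma eq_one_of_ne_zero : ∀ {c : ZMod 2}, c ≠ 0 → c = 1 := by decide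

/-- If `D` has an odd vector and `S` is an orthonormal set of maximal size, then the vectors of `D`
orthogonal to `S` already lie in `orth D`. -/
lemma mem_orth_of_maximal (h : IsON D S) (hmax : ∀ T, IsON D T → T.card ≤ S.card)
    (hodd : ∃ v ∈ D, dot v v = 1) {a : Fin n → ZMod 2} (haD : a ∈ D)
    (haS : ∀ s ∈ S, dot a s = 0) : a ∈ orth D := by
  have hself : ∀ x ∈ D, (∀ s ∈ S, dot x s = 0) → dot x x = 0 := by
    intro x hx hxS
    by_contra h0
    have h1 := eq_one_of_ne_zero h0
    have := hmax _ (h.insert hx h1 hxS)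
    rw [Finset.card_insert_of_notMem (notMem h1 hxS)] at this
    omega
  intro d hd
  obtain ⟨b, hbD, y, hy, hbS, rfl⟩ := h.exists_residual hd
  rw [dot_add', dot_span haS hy, add_zero]
  by_contra h0
  have hab := eq_one_of_ne_zero h0
  obtain ⟨s, hs⟩ : S.Nonempty := by
    by_contra hne
    rw [Finset.not_nonempty_iff_eq_empty] at hne
    obtain ⟨v, hv, hv1⟩ := hodd
    have := hself v hv (by simp [hne])
    simp [this] at hv1
  have hss : dot s s = 1 := by simpa using h.2 s hs s hs
  have hsT : ∀ t ∈ S.erase s, dot s t = 0 := fun t ht => by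
    rw [h.2 s hs t (Finset.mem_of_mem_erase ht), if_neg (Finset.ne_of_mem_erase ht).symm]
  -- Any `s + e` with `e ∈ D` orthogonal to `S` can take the place of `s`.
  have key : ∀ e ∈ D, (∀ t ∈ S, dot e t = 0) →
      s + e ∈ D ∧ dot (s + e) (s + e) = 1 ∧ ∀ t ∈ S.erase s, dot (s + e) t = 0 := by
    intro e he heS
    refine ⟨D.add_mem (h.1 s hs) he, ?_, fun t ht => ?_⟩
    · rw [dot_add', add_dot', add_dot', dot_comm' s e, heS s hs, hself e he heS, hss]
      simp
    · rw [add_dot', hsT t ht, heS t (Finset.mem_of_mem_erase ht), add_zero]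
  obtain ⟨a1, a2, a3⟩ := key a haD haS
  obtain ⟨b1, b2, b3⟩ := key b hbD hbS
  have hcross : dot (s + b) (s + a) = 0 := by
    rw [dot_add', add_dot', add_dot', dot_comm' s a, haS s hs, hbS s hs, hss, dot_comm' b a, hab]
    decide
  have b4 : ∀ t ∈ Insert.insert (s + a) (S.erase s), dot (s + b) t = 0 := by
    intro t ht
    rcases Finset.mem_insert.1 ht with rfl | ht
    exacts [hcross, b3 t ht]
  have := hmax _ (((h.mono (S.erase_subset s)).insert a1 a2 a3).insert b1 b2 b4)
  rw [Finset.card_insert_of_notMem (notMem b2 b4), Finset.card_insert_of_notMem (notMem a2 a3),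
    Finset.card_erase_add_one hs] at this
  omega

end IsON

/-- For a binary code `D` with `D^⊥ ⊊ D` and `k = dim D − dim D^⊥`,
`D` contains a vector of odd weight iff `D` has an orthonormal family of coset
representatives generating `D` over `D^⊥`. -/
theorem exists_selfdual_vector_iff_orthonormal_coset_basis
    (n : ℕ) (hn : 1 ≤ n) (D : Submodule (ZMod 2) (Fin n → ZMod 2))
    (hD : orth D < D) :
    (∃ v ∈ D, dot v v = 1) ↔
      ∃ w : Fin (Module.finrank (ZMod 2) D - Module.finrank (ZMod 2) (orth D)) →
          (Fin n → ZMod 2),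
        (∀ j, w j ∈ D) ∧
        D = orth D ⊔ Submodule.span (ZMod 2) (Set.range w) ∧
        (∀ i j, dot (w i) (w j) = if i = j then 1 else 0) := by
  classical
  constructor
  · intro hodd
    obtain ⟨S, hS, hmax⟩ := Set.exists_max_image {S | IsON D S} Finset.card (Set.toFinite _)
      ⟨∅, by simp [IsON]⟩
    have hsup : D = orth D ⊔ Submodule.span (ZMod 2) (S : Set (Fin n → ZMod 2)) := by
      refine le_antisymm (fun x hx => ?_) (sup_le hD.le (Submodule.span_le.2 hS.1))
      obtain ⟨e, he, y, hy, heS, rfl⟩ := IsON.exists_residual hS hx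
      exact Submodule.add_mem_sup (IsON.mem_orth_of_maximal hS hmax hodd he heS) hy
    have hcard : S.card = Module.finrank (ZMod 2) D - Module.finrank (ZMod 2) (orth D) := by
      have h1 := Submodule.finrank_sup_add_finrank_inf_eq (orth D)
        (Submodule.span (ZMod 2) (S : Set (Fin n → ZMod 2)))
      rw [← hsup, (IsON.disjoint_orth hS).eq_bot, finrank_bot,
        finrank_span_finset_eq_card (IsON.linearIndependent hS)] at h1
      omega
    let e := S.equivFinOfCardEq hcard
    refine ⟨fun j => e.symm j, fun j => hS.1 _ (e.symm j).2, ?_, fun i j => ?_⟩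
    · have : Set.range (fun j => (e.symm j : Fin n → ZMod 2)) = S := by
        exact (e.symm.surjective.range_comp Subtype.val).trans Subtype.range_coe
      rw [this]
      exact hsup
    · rw [hS.2 _ (e.symm i).2 _ (e.symm j).2]
      simp only [Subtype.coe_inj, e.symm.injective.eq_iff]
  · rintro ⟨w, hwD, -, hw⟩
    have := Submodule.finrank_lt_finrank_of_lt hD
    exact ⟨w ⟨0, by omega⟩, hwD _, by rw [hw, if_pos rfl]⟩
end

section
/- Let a, b, c ∈ (Fin n → ZMod 2) satisfy a ⬝ a = 1, b ⬝ b = 0, c ⬝ c = 0, a ⬝ b = 0, a ⬝ c = 0, and b ⬝ c = 1, where ⬝ is the standard dot product over ZMod 2. Define a' = a + b + c, b' = a + b, c' = a + c. Then a' ⬝ a' = b' ⬝ b' = c' ⬝ c' = 1, a' ⬝ b' = a' ⬝ c' = b' ⬝ c' = 0, and span{a', b', c'} = span{a, b, c}. -/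
theorem dot_add_left {n : ℕ} (u v w : Fin n → ZMod 2) :
    dot (u + v) w = dot u w + dot v w := by
  simp [dot, add_mul, Finset.sum_add_distrib]

theorem dot_symm {n : ℕ} (u v : Fin n → ZMod 2) : dot u v = dot v u := by
  simp [dot, mul_comm]

theorem dot_add_right {n : ℕ} (u v w : Fin n → ZMod 2) :
    dot u (v + w) = dot u v + dot u w := by
  simp [dot, mul_add, Finset.sum_add_distrib]

/-- **Lemma 2.** The basis change `a' = a+b+c`, `b' = a+b`, `c' = a+c`
turns one same-support vector `a` and one swapped pair `(b, c)` into three pairwise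
orthogonal vectors of odd weight spanning the same space. -/
theorem basis_change_three_hyperbolic_pairs
    (n : ℕ) (a b c : Fin n → ZMod 2)
    (haa : dot a a = 1) (hbb : dot b b = 0) (hcc : dot c c = 0)
    (hab : dot a b = 0) (hac : dot a c = 0) (hbc : dot b c = 1) :
    dot (a + b + c) (a + b + c) = 1 ∧
    dot (a + b) (a + b) = 1 ∧
    dot (a + c) (a + c) = 1 ∧
    dot (a + b + c) (a + b) = 0 ∧
    dot (a + b + c) (a + c) = 0 ∧
    dot (a + b) (a + c) = 0 ∧
    Submodule.span (ZMod 2) {a + b + c, a + b, a + c} =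
      Submodule.span (ZMod 2) {a, b, c} := by
  have hba : dot b a = 0 := by rw [dot_symm, hab]
  have hca : dot c a = 0 := by rw [dot_symm, hac]
  have hcb : dot c b = 1 := by rw [dot_symm, hbc]
  have h2 (v : Fin n → ZMod 2) : v + v = 0 := by
    funext i
    exact CharTwo.add_self_eq_zero (v i)
  refine ⟨?_, ?_, ?_, ?_, ?_, ?_, ?_⟩
  iterate 6
    · simp only [dot_add_left, dot_add_right, haa, hbb, hcc, hab, hac, hbc, hba, hca, hcb]
      decide
  apply le_antisymm
  · rw [Submodule.span_le]
    have ha : a ∈ Submodule.span (ZMod 2) {a, b, c} := Submodule.subset_span (by simp)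
    have hb : b ∈ Submodule.span (ZMod 2) {a, b, c} := Submodule.subset_span (by simp)
    have hc : c ∈ Submodule.span (ZMod 2) {a, b, c} := Submodule.subset_span (by simp)
    rintro x (rfl | rfl | rfl)
    · exact add_mem (add_mem ha hb) hc
    · exact add_mem ha hb
    · exact add_mem ha hc
  · rw [Submodule.span_le]
    set S := Submodule.span (ZMod 2) {a + b + c, a + b, a + c}
    have ha' : a + b + c ∈ S := Submodule.subset_span (by simp)
    have hb' : a + b ∈ S := Submodule.subset_span (by simp)
    have hc' : a + c ∈ S := Submodule.subset_span (by simp)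
    have ea : a + b + c + (a + b) + (a + c) = a := by
      linear_combination h2 a + h2 b + h2 c
    have eb : a + b + c + (a + c) = b := by
      linear_combination h2 a + h2 c
    have ec : a + b + c + (a + b) = c := by
      linear_combination h2 a + h2 b
    rintro x (rfl | rfl | rfl)
    · simpa only [SetLike.mem_coe, ea] using add_mem (add_mem ha' hb') hc'
    · simpa only [SetLike.mem_coe, eb] using add_mem ha' hc'
    · simpa only [SetLike.mem_coe, ec] using add_mem ha' hb'
end

section
/- Let C be a submodule of (Fin n → ZMod 2) that is self-orthogonal, i.e., u ⬝ w = 0 for all u, w ∈ C, where ⬝ is the standard dot product over ZMod 2. Then every c ∈ C has even Hamming weight, and there exists a vector v ∈ (Fin n → ZMod 2) such that for every c ∈ C, v ⬝ c = 0 if wt(c) ≡ 0 (mod 4) and v ⬝ c = 1 if wt(c) ≡ 2 (mod 4); equivalently, v ⬝ c equals the residue of wt(c)/2 modulo 2. -/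
/-- Hamming weight of a binary vector. -/
def wt {n : ℕ} (v : Fin n → ZMod 2) : ℕ :=
  (Finset.univ.filter fun i => v i = 1).card

theorem dot_eq_card {n : ℕ} (u w : Fin n → ZMod 2) :
    dot u w = ((Finset.univ.filter fun i => u i = 1 ∧ w i = 1).card : ZMod 2) := by
  have key : ∀ a b : ZMod 2, a * b = if a = 1 ∧ b = 1 then 1 else 0 := by decide
  simp only [dot, key, Finset.sum_boole]

theorem wt_add {n : ℕ} (u w : Fin n → ZMod 2) :
    wt (u + w) + 2 * (Finset.univ.filter fun i => u i = 1 ∧ w i = 1).card = wt u + wt w := by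
  have key : ∀ a b : ZMod 2, (if a + b = 1 then 1 else 0) + 2 * (if a = 1 ∧ b = 1 then 1 else 0)
      = (if a = 1 then 1 else 0) + (if b = 1 then 1 else 0 : ℕ) := by decide
  simp only [wt, Finset.card_filter, Finset.mul_sum, ← Finset.sum_add_distrib, Pi.add_apply, key]

/-- Every linear functional on `(ZMod 2)ⁿ` is the dot product with some vector. -/
theorem exists_dot_eq {n : ℕ} (g : (Fin n → ZMod 2) →ₗ[ZMod 2] ZMod 2) :
    ∃ v : Fin n → ZMod 2, ∀ x, dot v x = g x :=
  ⟨(dotProductEquiv (ZMod 2) (Fin n)).symm g, fun x =>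
    LinearMap.congr_fun ((dotProductEquiv (ZMod 2) (Fin n)).apply_symm_apply g) x⟩

/-- **Lemma 3, classical core.** Every vector of a self-orthogonal binary
code `C` has even Hamming weight, and there is a vector `v` whose overlap with each
codeword `c` equals `wt c / 2` modulo `2`: `v ⬝ c = 0` when `wt c ≡ 0 (mod 4)` and
`v ⬝ c = 1` when `wt c ≡ 2 (mod 4)`. -/
theorem selfOrthogonal_even_weight_and_exists_phase_vector
    (n : ℕ) (C : Submodule (ZMod 2) (Fin n → ZMod 2))
    (hC : ∀ u ∈ C, ∀ w ∈ C, dot u w = 0) :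
    (∀ c ∈ C, Even (wt c)) ∧
    ∃ v : Fin n → ZMod 2, ∀ c ∈ C,
      (wt c % 4 = 0 → dot v c = 0) ∧ (wt c % 4 = 2 → dot v c = 1) := by
  have overlap : ∀ u ∈ C, ∀ w ∈ C,
      2 ∣ (Finset.univ.filter fun i => u i = 1 ∧ w i = 1).card := fun u hu w hw =>
    (ZMod.natCast_eq_zero_iff _ 2).1 (dot_eq_card u w ▸ hC u hu w hw)
  have even : ∀ c ∈ C, 2 ∣ wt c := fun c hc => by
    simpa only [wt, and_self] using overlap c hc c hc
  let f : C →+ ZMod 2 := AddMonoidHom.mk' (fun c => ((wt c.1 / 2 : ℕ) : ZMod 2)) <| by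
    rintro ⟨u, hu⟩ ⟨w, hw⟩
    have h := wt_add u w
    have ho := overlap u hu w hw
    have h1 := even u hu
    have h2 := even w hw
    simp only [AddMemClass.mk_add_mk]
    rw [← Nat.cast_add, ZMod.natCast_eq_natCast_iff']
    omega
  obtain ⟨g, hg⟩ := (f.toZModLinearMap 2).exists_extend
  obtain ⟨v, hv⟩ := exists_dot_eq g
  have hvc : ∀ c ∈ C, dot v c = ((wt c / 2 : ℕ) : ZMod 2) := fun c hc =>
    (hv c).trans (LinearMap.congr_fun hg ⟨c, hc⟩)
  refine ⟨fun c hc => even_iff_two_dvd.2 (even c hc), v, fun c hc => ⟨fun h => ?_, fun h => ?_⟩⟩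
  · rw [hvc c hc, ZMod.natCast_eq_zero_iff]
    omega
  · rw [hvc c hc, ← Nat.cast_one, ZMod.natCast_eq_natCast_iff']
    omega
end

section
/- Let g : Fin r → (Fin n → ZMod 2) and h : Fin k → (Fin n → ZMod 2) be families of vectors such that g i ⬝ g i' = 0 for all i, i' ∈ Fin r and g i ⬝ h j = 0 for all i ∈ Fin r, j ∈ Fin k, where ⬝ is the standard dot product over ZMod 2. Then for all coefficient families a : Fin r → ZMod 2 and b : Fin k → ZMod 2, the vector v = ∑ i, a i • g i + ∑ j, b j • h j satisfies v ⬝ v = ∑ j, b j * (h j ⬝ h j). -/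
/-- Every element of `ZMod 2` is idempotent, so `u ⬝ u` is the coordinate sum of `u`; in particular
`u ↦ u ⬝ u` is linear. -/
lemma dot_self_eq_sum {n : ℕ} (u : Fin n → ZMod 2) : dot u u = ∑ i, u i := by
  have hsq : ∀ x : ZMod 2, x * x = x := by decide
  simp [dot, hsq]

/-- **key identity in Lemma 5.** For `v = ∑ i, a i • g i + ∑ j, b j • h j`
with the `g i` orthogonal to each other and to the `h j`,
`v ⬝ v = ∑ j, b j * (h j ⬝ h j)`. -/
theorem selfdot_of_combination
    (n r k : ℕ) (g : Fin r → (Fin n → ZMod 2)) (h : Fin k → (Fin n → ZMod 2))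
    (hgg : ∀ i i', dot (g i) (g i') = 0)
    (hgh : ∀ i j, dot (g i) (h j) = 0)
    (a : Fin r → ZMod 2) (b : Fin k → ZMod 2) :
    dot (∑ i, a i • g i + ∑ j, b j • h j) (∑ i, a i • g i + ∑ j, b j • h j) =
      ∑ j, b j * dot (h j) (h j) := by
  have hg : ∀ i, ∑ l, g i l = 0 := fun i => by rw [← dot_self_eq_sum, hgg]
  simp only [dot_self_eq_sum, Pi.add_apply, Finset.sum_apply, Pi.smul_apply, smul_eq_mul,
    Finset.sum_add_distrib]
  rw [Finset.sum_comm, Finset.sum_comm (f := fun l j => b j * h j l)]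
  simp [← Finset.mul_sum, hg]
end

section
/- Let n be odd and let D be a submodule of (Fin n → ZMod 2) whose orthogonal complement D^⊥ (with respect to the standard dot product) satisfies D^⊥ ≤ D. Then there exists v ∈ D with v ⬝ v = 1; indeed the all-ones vector (fun _ => 1) belongs to D and satisfies (fun _ => 1) ⬝ (fun _ => 1) = 1. -/
theorem dot_one_eq_dot_self {n : ℕ} (a : Fin n → ZMod 2) :
    dot a (fun _ => 1) = dot a a := by
  have h : ∀ x : ZMod 2, x * 1 = x * x := by decide
  simp only [dot, h]

/-- A submodule containing its orthogonal complement contains the all-ones vector,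
in any length. -/
theorem one_mem_of_orth_le {n : ℕ} (D : Submodule (ZMod 2) (Fin n → ZMod 2))
    (hD : orth D ≤ D) : (fun _ : Fin n => (1 : ZMod 2)) ∈ D := by
  refine (Subspace.forall_mem_dualAnnihilator_apply_eq_zero_iff D _).1 fun f hf => ?_
  obtain ⟨a, rfl⟩ := (dotProductEquiv (ZMod 2) (Fin n)).surjective f
  have ha : a ∈ orth D := fun w hw => (Submodule.mem_dualAnnihilator _).1 hf w hw
  exact (dot_one_eq_dot_self a).trans (ha a (hD ha))

/-- **Corollary 1, classical content.** For odd `n` and `D^⊥ ≤ D`, the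
code `D` contains a vector of odd weight: indeed the all-ones vector lies in `D` and has
`v ⬝ v = 1`. -/
theorem exists_odd_selfdot_of_odd_length
    (n : ℕ) (hn : Odd n) (D : Submodule (ZMod 2) (Fin n → ZMod 2)) (hD : orth D ≤ D) :
    (∃ v ∈ D, dot v v = 1) ∧
    (fun _ : Fin n => (1 : ZMod 2)) ∈ D ∧
    dot (fun _ : Fin n => (1 : ZMod 2)) (fun _ : Fin n => (1 : ZMod 2)) = 1 := by
  have h1 := one_mem_of_orth_le D hD
  have h2 : dot (fun _ : Fin n => (1 : ZMod 2)) (fun _ => 1) = 1 := by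
    simpa [dot] using ZMod.natCast_eq_one_iff_odd.2 hn
  exact ⟨⟨_, h1, h2⟩, h1, h2⟩
end

section
/- Let D = {v ∈ (Fin 4 → ZMod 2) | ∑ i, v i = 0} be the even-weight code of length 4. Then the orthogonal complement D^⊥ of D with respect to the standard dot product equals the span of the all-ones vector (1,1,1,1), D^⊥ ≤ D, and there is no v ∈ D with v ⬝ v = 1. -/
/-- The coordinate-sum linear functional. -/
def sumForm (n : ℕ) : (Fin n → ZMod 2) →ₗ[ZMod 2] ZMod 2 where
  toFun v := ∑ i, v i
  map_add' a b := by simp [Finset.sum_add_distrib]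
  map_smul' c v := by simp [Finset.mul_sum]

theorem mem_ker_sumForm {n : ℕ} (v : Fin n → ZMod 2) :
    v ∈ LinearMap.ker (sumForm n) ↔ ∑ i, v i = 0 := Iff.rfl

theorem dot_self {n : ℕ} (v : Fin n → ZMod 2) : dot v v = ∑ i, v i := by
  have h : ∀ x : ZMod 2, x * x = x := by decide
  simp [dot, h]

/-- The words `e₀ + eᵢ` already force a vector orthogonal to the even-weight code to be
constant. -/
theorem orth_ker_sumForm_four :
    orth (LinearMap.ker (sumForm 4)) =
      Submodule.span (ZMod 2) {fun _ : Fin 4 => (1 : ZMod 2)} := by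
  ext v
  rw [Submodule.mem_span_singleton]
  constructor
  · intro hv
    have h_coord : ∀ i, v 0 = v i := by
      intro i
      have hw : dot v (Pi.single 0 1 + Pi.single i 1) = 0 := by
        apply hv
        rw [mem_ker_sumForm]
        simpa [Finset.sum_add_distrib] using CharTwo.add_self_eq_zero (1 : ZMod 2)
      have h_sum : v 0 + v i = 0 := by
        simpa [dot, mul_add, Finset.sum_add_distrib, Pi.single_apply] using hw
      exact CharTwo.add_eq_zero.mp h_sum
    exact ⟨v 0, by ext i; simp [h_coord i]⟩
  · rintro ⟨c, rfl⟩ w hw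
    rw [mem_ker_sumForm] at hw
    simp [dot, ← Finset.mul_sum, hw]

/-- **the [[4,2,2]] code.** For the even-weight code `D` of length 4,
`D^⊥` is spanned by the all-ones vector, `D^⊥ ≤ D`, and `D` contains no vector of odd
weight; hence the `[[4,2,2]]` code has no compatible symplectic basis. -/
theorem evenWeightCode_four_no_odd_vector :
    orth (LinearMap.ker (sumForm 4)) =
      Submodule.span (ZMod 2) {fun _ : Fin 4 => (1 : ZMod 2)} ∧
    orth (LinearMap.ker (sumForm 4)) ≤ LinearMap.ker (sumForm 4) ∧
    ¬ ∃ v ∈ LinearMap.ker (sumForm 4), dot v v = 1 := by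
  refine ⟨orth_ker_sumForm_four, ?_, ?_⟩
  · rw [orth_ker_sumForm_four, Submodule.span_singleton_le_iff_mem, mem_ker_sumForm]
    decide
  · rintro ⟨v, hv, h_one⟩
    rw [dot_self, (mem_ker_sumForm v).mp hv] at h_one
    exact zero_ne_one h_one
end

section
/- In (Fin 6 → ZMod 2), let g₁ = (1,1,0,0,1,1), g₂ = (0,0,1,1,1,1), x₁ = (1,0,1,0,1,0), x₂ = (0,1,0,1,0,1), let G = span{g₁, g₂}, and let D = G^⊥ be the orthogonal complement of G with respect to the standard dot product. Then: G ≤ D (i.e., g₁ ⬝ g₁ = g₁ ⬝ g₂ = g₂ ⬝ g₂ = 0); x₁ ∈ D and x₂ ∈ D; x₁ ⬝ x₁ = 1, x₂ ⬝ x₂ = 1, x₁ ⬝ x₂ = 0; and D = G + span{x₁, x₂}. -/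
/-- Orthogonality to a span of two vectors only has to be tested on the two generators. -/
theorem mem_orth_span_pair {n : ℕ} (a b v : Fin n → ZMod 2) :
    v ∈ orth (Submodule.span (ZMod 2) {a, b}) ↔ dot v a = 0 ∧ dot v b = 0 := by
  constructor
  · intro h
    exact ⟨h a (Submodule.subset_span (by simp)), h b (Submodule.subset_span (by simp))⟩
  · rintro ⟨ha, hb⟩ w hw
    obtain ⟨s, t, rfl⟩ := Submodule.mem_span_pair.1 hw
    have h : dot v (s • a + t • b) = s * dot v a + t * dot v b := by
      simp [dot, mul_add, Finset.sum_add_distrib, Finset.mul_sum, mul_left_comm]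
    rw [h, ha, hb, mul_zero, mul_zero, add_zero]

/-- The coefficients of `v ∈ G^⊥` in the basis `g₁, g₂, x₁, x₂`: those of `x₁`, `x₂` are the dot
products of `v` with `x₁`, `x₂`, and those of `g₁`, `g₂` are read off from coordinates. -/
theorem code622_decomp : ∀ v : Fin 6 → ZMod 2,
    dot v ![1, 1, 0, 0, 1, 1] = 0 → dot v ![0, 0, 1, 1, 1, 1] = 0 →
    ((v 2 + v 4) • ![1, 1, 0, 0, 1, 1] + (v 0 + v 4) • ![0, 0, 1, 1, 1, 1]) +
      ((v 0 + v 2 + v 4) • ![1, 0, 1, 0, 1, 0] + (v 1 + v 3 + v 5) • ![0, 1, 0, 1, 0, 1]) = v := by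
  set_option maxRecDepth 20000 in decide

/-- **the [[6,2,2]] code.** With stabilizer generator vectors
`g₁ = (1,1,0,0,1,1)`, `g₂ = (0,0,1,1,1,1)` spanning `G`, and `D = G^⊥`: `G ≤ D`, the
logical vectors `x₁ = (1,0,1,0,1,0)`, `x₂ = (0,1,0,1,0,1)` lie in `D`, they form an
orthonormal pair, and `D = G + span{x₁, x₂}`; this is a compatible symplectic basis of
the `[[6,2,2]]` code. -/
theorem code622_compatible_basis :
    let g₁ : Fin 6 → ZMod 2 := ![1, 1, 0, 0, 1, 1]
    let g₂ : Fin 6 → ZMod 2 := ![0, 0, 1, 1, 1, 1]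
    let x₁ : Fin 6 → ZMod 2 := ![1, 0, 1, 0, 1, 0]
    let x₂ : Fin 6 → ZMod 2 := ![0, 1, 0, 1, 0, 1]
    let G : Submodule (ZMod 2) (Fin 6 → ZMod 2) := Submodule.span (ZMod 2) {g₁, g₂}
    G ≤ orth G ∧
    x₁ ∈ orth G ∧ x₂ ∈ orth G ∧
    dot x₁ x₁ = 1 ∧ dot x₂ x₂ = 1 ∧ dot x₁ x₂ = 0 ∧
    orth G = G ⊔ Submodule.span (ZMod 2) {x₁, x₂} := by
  intro g₁ g₂ x₁ x₂ G
  have hG : G ≤ orth G := by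
    refine Submodule.span_le.2 ?_
    rintro v (rfl | rfl)
    · exact (mem_orth_span_pair _ _ _).2 (by decide)
    · exact (mem_orth_span_pair _ _ _).2 (by decide)
  have hx₁ : x₁ ∈ orth G := (mem_orth_span_pair _ _ _).2 (by decide)
  have hx₂ : x₂ ∈ orth G := (mem_orth_span_pair _ _ _).2 (by decide)
  refine ⟨hG, hx₁, hx₂, by decide, by decide, by decide, le_antisymm ?_ ?_⟩
  · intro v hv
    obtain ⟨h₁, h₂⟩ := (mem_orth_span_pair _ _ _).1 hv
    rw [← code622_decomp v h₁ h₂]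
    exact Submodule.add_mem_sup (Submodule.mem_span_pair.2 ⟨_, _, rfl⟩)
      (Submodule.mem_span_pair.2 ⟨_, _, rfl⟩)
  · refine sup_le hG (Submodule.span_le.2 ?_)
    rintro v (rfl | rfl)
    · exact hx₁
    · exact hx₂
end
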